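/- arXiv:cs/0210027 — 3 statements merged into one kernel-verified Lean document; each statement's English description precedes it below -/
import Mathlib

section
/- Let P be a definite (negation-free) propositional normal logic program. Then there is a unique two-valued model M of P for which there exists a total level mapping l : B_P → α such that for every atom A ∈ M there is a clause A ← A₁,…,Aₙ in P with Aᵢ ∈ M and l(A) > l(Aᵢ) for all i = 1,…,n. Moreover, this unique M equals the least two-valued model T_P⁺↑ω of P. -/
namespace LP

/-- A literal over a set of propositional atoms: an atom or a negated atom. -/
inductive Lit (atom : Type) where
  | pos : atom → Lit atom
  | neg : atom → Lit atom

/-- The underlying atom of a literal. -/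
def Lit.atomOf {atom : Type} : Lit atom → atom
  | .pos a => a
  | .neg a => a

/-- A clause `head ← pos₁,…,posₙ, ¬neg₁,…,¬negₘ`. -/
structure Clause (atom : Type) where
  head : atom
  pos : Finset atom
  neg : Finset atom

variable {atom : Type}

/-- A (propositional) normal logic program: a set of clauses. -/
abbrev Program (atom : Type) := Set (Clause atom)

/-- Partial interpretations: sets of literals. -/
abbrev Interp (atom : Type) := Set (Lit atom)

def Consistent (I : Interp atom) : Prop := ∀ a : atom, ¬ (Lit.pos a ∈ I ∧ Lit.neg a ∈ I)

def Total (I : Interp atom) : Prop := ∀ a : atom, Lit.pos a ∈ I ∨ Lit.neg a ∈ I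

/-- An atom is defined (true or false, i.e. not undefined) in `I`. -/
def Defined (I : Interp atom) (A : atom) : Prop := Lit.pos A ∈ I ∨ Lit.neg A ∈ I

/-- Every body literal of the clause is true in `I`. -/
def BodyTrue (I : Interp atom) (C : Clause atom) : Prop :=
  (∀ a ∈ C.pos, Lit.pos a ∈ I) ∧ (∀ b ∈ C.neg, Lit.neg b ∈ I)

/-- Some body literal of the clause is false in `I`. -/
def BodyFalse (I : Interp atom) (C : Clause atom) : Prop :=
  (∃ a ∈ C.pos, Lit.neg a ∈ I) ∨ (∃ b ∈ C.neg, Lit.pos b ∈ I)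

/-- Three-valued model. -/
def Model3 (P : Program atom) (I : Interp atom) : Prop :=
  Consistent I ∧ ∀ C ∈ P,
    (BodyTrue I C → Lit.pos C.head ∈ I) ∧ (¬ BodyFalse I C → Lit.neg C.head ∉ I)

/-- Two-valued model. -/
def Model2 (P : Program atom) (M : Set atom) : Prop :=
  ∀ C ∈ P, (∀ a ∈ C.pos, a ∈ M) → (∀ b ∈ C.neg, b ∉ M) → C.head ∈ M

/-- A program is definite if no clause has negative body literals. -/
def Definite (P : Program atom) : Prop := ∀ C ∈ P, C.neg = ∅

/-- The one-step operator `T_P⁺` for definite programs. -/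
def Tplus (P : Program atom) (M : Set atom) : Set atom :=
  {A | ∃ C ∈ P, C.head = A ∧ C.neg = ∅ ∧ ∀ a ∈ C.pos, a ∈ M}

def TplusIter (P : Program atom) : ℕ → Set atom
  | 0 => ∅
  | n + 1 => Tplus P (TplusIter P n)

/-- `T_P⁺ ↑ ω`, the least two-valued model of a definite program. -/
def TplusOmega (P : Program atom) : Set atom := ⋃ n, TplusIter P n

/-- The Gelfond–Lifschitz reduct `P/M`. -/
def GLreduct (P : Program atom) (M : Set atom) : Program atom :=
  {C' | ∃ C ∈ P, (∀ b ∈ C.neg, b ∉ M) ∧ C' = ⟨C.head, C.pos, ∅⟩}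

/-- The Gelfond–Lifschitz operator. -/
def GLop (P : Program atom) (M : Set atom) : Set atom := TplusOmega (GLreduct P M)

/-- Stable model. -/
def Stable (P : Program atom) (M : Set atom) : Prop := GLop P M = M

def posLits (S : Set atom) : Interp atom := Lit.pos '' S
def negLits (S : Set atom) : Interp atom := Lit.neg '' S

/-- Three-valued immediate-consequence operator `T_P`. -/
def TP (P : Program atom) (I : Interp atom) : Set atom :=
  {A | ∃ C ∈ P, C.head = A ∧ BodyTrue I C}

/-- `F_P`: atoms all of whose clauses have false bodies. -/
def FP (P : Program atom) (I : Interp atom) : Set atom :=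
  {A | ∀ C ∈ P, C.head = A → BodyFalse I C}

/-- Fitting's operator `Φ_P`. -/
def Phi (P : Program atom) (I : Interp atom) : Interp atom :=
  posLits (TP P I) ∪ negLits (FP P I)

/-- Knaster–Tarski least (pre-)fixed point of an operator on sets. -/
def lfpSet {L : Type*} (F : Set L → Set L) : Set L := ⋂₀ {I | F I ⊆ I}

/-- Knaster–Tarski greatest (post-)fixed point of an operator on sets. -/
def gfpSet {L : Type*} (F : Set L → Set L) : Set L := ⋃₀ {I | I ⊆ F I}

/-- The Fitting (Kripke–Kleene) model: least fixed point of `Φ_P`. -/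
def FittingModel (P : Program atom) : Interp atom := lfpSet (Phi P)

/-- Transfinite iteration `F ↑ α` of an operator starting from `∅`. -/
noncomputable def iterOrd {L : Type*} (F : Set L → Set L) (α : Ordinal.{0}) : Set L :=
  Ordinal.limitRecOn α ∅ (fun _ ih => F ih) (fun o _ ih => ⋃ β, ⋃ h : β < o, ih β h)

/-- `U` is an unfounded set of `P` with respect to `I`. -/
def Unfounded (P : Program atom) (I : Interp atom) (U : Set atom) : Prop :=
  ∀ A ∈ U, ∀ C ∈ P, C.head = A → BodyFalse I C ∨ ∃ a ∈ C.pos, a ∈ U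

/-- The greatest unfounded set of `P` with respect to `I`. -/
def UP (P : Program atom) (I : Interp atom) : Set atom := ⋃₀ {U | Unfounded P I U}

/-- The van Gelder–Ross–Schlipf operator `W_P`. -/
def WP (P : Program atom) (I : Interp atom) : Interp atom :=
  posLits (TP P I) ∪ negLits (UP P I)

/-- The well-founded model: least fixed point of `W_P`. -/
def WFModel (P : Program atom) : Interp atom := lfpSet (WP P)

/-- `P` satisfies (F) with respect to `I` and the level mapping `l`. -/
def CondF (P : Program atom) (I : Interp atom) (l : atom → Ordinal.{0}) : Prop :=
  ∀ A : atom, Defined I A →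
    (Lit.pos A ∈ I ∧ ∃ C ∈ P, C.head = A ∧
        (∀ a ∈ C.pos, Lit.pos a ∈ I ∧ l a < l A) ∧
        (∀ b ∈ C.neg, Lit.neg b ∈ I ∧ l b < l A)) ∨
    (Lit.neg A ∈ I ∧ ∀ C ∈ P, C.head = A →
        (∃ a ∈ C.pos, Lit.neg a ∈ I ∧ l a < l A) ∨
        (∃ b ∈ C.neg, Lit.pos b ∈ I ∧ l b < l A))

/-- `P` satisfies (WF) with respect to `I` and the level mapping `l`. -/
def CondWF (P : Program atom) (I : Interp atom) (l : atom → Ordinal.{0}) : Prop :=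
  ∀ A : atom, Defined I A →
    (Lit.pos A ∈ I ∧ ∃ C ∈ P, C.head = A ∧
        (∀ a ∈ C.pos, Lit.pos a ∈ I ∧ l a < l A) ∧
        (∀ b ∈ C.neg, Lit.neg b ∈ I ∧ l b < l A)) ∨
    (Lit.neg A ∈ I ∧ ∀ C ∈ P, C.head = A →
        (∃ a ∈ C.pos, Lit.neg a ∈ I ∧ l a ≤ l A) ∨
        (∃ b ∈ C.neg, Lit.pos b ∈ I ∧ l b < l A))

/-- `P` satisfies (WS) with respect to `I` and the level mapping `l`. -/
def CondWS (P : Program atom) (I : Interp atom) (l : atom → Ordinal.{0}) : Prop :=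
  ∀ A : atom, Defined I A →
    (Lit.pos A ∈ I ∧ ∃ C ∈ P, C.head = A ∧
        (∀ a ∈ C.pos, Lit.pos a ∈ I ∧ l a < l A) ∧
        (∀ b ∈ C.neg, Lit.neg b ∈ I ∧ l b < l A)) ∨
    (Lit.neg A ∈ I ∧ ∀ C ∈ P, C.head = A →
        (∃ a ∈ C.pos, Lit.neg a ∈ I ∧ l a < l A) ∨
        ((∀ a ∈ C.pos, l a ≤ l A) ∧ (∀ b ∈ C.neg, l b < l A) ∧
            ∃ a ∈ C.pos, Lit.neg a ∈ I) ∨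
        (∃ b ∈ C.neg, Lit.pos b ∈ I ∧ l b < l A))

/-- `A` refers to `B`. -/
def RefersTo (P : Program atom) (A B : atom) : Prop :=
  ∃ C ∈ P, C.head = A ∧ (B ∈ C.pos ∨ B ∈ C.neg)

/-- `A` refers negatively to `B`. -/
def RefersNeg (P : Program atom) (A B : atom) : Prop :=
  ∃ C ∈ P, C.head = A ∧ B ∈ C.neg

/-- `DepOn P A B`: `A` depends on `B`, i.e. `B ≤ A`. -/
def DepOn (P : Program atom) : atom → atom → Prop := Relation.TransGen (RefersTo P)

/-- `DepNeg P B A`: `B < A`, i.e. `A` depends negatively on `B`. -/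
def DepNeg (P : Program atom) (B A : atom) : Prop :=
  ∃ C D, RefersNeg P C D ∧ (DepOn P A C ∨ C = A) ∧ (DepOn P D B ∨ B = D)

/-- `A ~ B`. -/
def Sim (P : Program atom) (A B : atom) : Prop :=
  A = B ∨ (DepNeg P A B ∧ DepNeg P B A)

/-- The components of `P`: equivalence classes of `~`. -/
def IsComponent (P : Program atom) (C : Set atom) : Prop :=
  ∃ A : atom, C = {B | Sim P A B}

/-- A trivial component: a singleton `{A}` with `A ≮ A`. -/
def TrivialComponent (P : Program atom) (C : Set atom) : Prop :=
  ∃ A : atom, C = {A} ∧ ¬ DepNeg P A A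

/-- The ordering `≺` on components. -/
def CompLt (P : Program atom) (C₁ C₂ : Set atom) : Prop :=
  C₁ ≠ C₂ ∧ ∀ A₁ ∈ C₁, ∃ A₂ ∈ C₂, DepNeg P A₁ A₂

def MinimalComponent (P : Program atom) (C : Set atom) : Prop :=
  IsComponent P C ∧ ¬ ∃ C₂, IsComponent P C₂ ∧ CompLt P C₂ C

/-- The bottom stratum `S(P)`: union of all minimal components. -/
def bottomStratum (P : Program atom) : Set atom :=
  {A | ∃ C, MinimalComponent P C ∧ A ∈ C}

/-- The bottom layer `L(P)`: clauses with head in the bottom stratum. -/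
def bottomLayer (P : Program atom) : Program atom :=
  {C ∈ P | C.head ∈ bottomStratum P}

/-- Delete from the body of `C` all literals true in `I`. -/
noncomputable def reduceClause (I : Interp atom) (C : Clause atom) : Clause atom :=
  letI : ∀ p : Prop, Decidable p := fun p => Classical.propDecidable p
  ⟨C.head, C.pos.filter (fun a => Lit.pos a ∉ I), C.neg.filter (fun b => Lit.neg b ∉ I)⟩

/-- Steps (1) and (2) of the reduct of `P` with respect to `I`. -/
noncomputable def step12 (P : Program atom) (I : Interp atom) : Program atom :=
  {C' | ∃ C ∈ P, Lit.pos C.head ∉ I ∧ ¬ BodyFalse I C ∧ C' = reduceClause I C}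

def IsUnitClause (C : Clause atom) : Prop := C.pos = ∅ ∧ C.neg = ∅

/-- The reduct `P/I` of Przymusinska–Przymusinski (steps (1)–(3)). -/
noncomputable def reduct (P : Program atom) (I : Interp atom) : Program atom :=
  {C ∈ step12 P I | IsUnitClause C ∨ ¬ ∃ C' ∈ step12 P I, C'.head = C.head ∧ IsUnitClause C'}

/-- The atoms occurring in `P`. -/
def atomsOf (P : Program atom) : Set atom :=
  {A | ∃ C ∈ P, A = C.head ∨ A ∈ C.pos ∨ A ∈ C.neg}

/-- `R`: atoms undefined in `N` which are eliminated from `P` by reducing w.r.t. `N`. -/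
noncomputable def Ratoms (P : Program atom) (N : Interp atom) : Set atom :=
  {A | A ∈ atomsOf P ∧ A ∉ atomsOf (reduct P N) ∧ ¬ Defined N A}

/-- The definite (partial) model of a definite program `Q`. -/
def defPartialModel (Q : Program atom) : Interp atom :=
  posLits (TplusOmega Q) ∪ negLits (atomsOf Q \ TplusOmega Q)

/-- The stopping condition of the weakly perfect model construction at `N`. -/
noncomputable def stopCond (P : Program atom) (N : Interp atom) : Prop :=
  reduct P N = ∅ ∨ bottomStratum (reduct P N) = ∅ ∨
    ∃ C ∈ bottomLayer (reduct P N), C.neg ≠ ∅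

/-- `M_α` computed from `N_α` (empty if the construction has stopped). -/
noncomputable def Mstep (P : Program atom) (N : Interp atom) : Interp atom :=
  letI : ∀ p : Prop, Decidable p := fun p => Classical.propDecidable p
  if stopCond P N then ∅
  else defPartialModel (bottomLayer (reduct P N)) ∪ negLits (Ratoms P N)

/-- `N_α = ⋃_{0<δ<α} M_δ` of the weakly perfect model construction. -/
noncomputable def Nseq (P : Program atom) : Ordinal.{0} → Interp atom :=
  Ordinal.lt_wf.fix (C := fun _ => Interp atom)
    (fun α ih => ⋃ β : Ordinal.{0}, ⋃ h : β < α, Mstep P (ih β h))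

/-- The stage at which the weakly perfect model construction stops. -/
noncomputable def wpStop (P : Program atom) : Ordinal.{0} :=
  sInf {α | stopCond P (Nseq P α)}

/-- The weakly perfect model `M_P = N_α ∪ ¬R_α` at the stopping stage `α`. -/
noncomputable def weaklyPerfectModel (P : Program atom) : Interp atom :=
  Nseq P (wpStop P) ∪ negLits (Ratoms P (Nseq P (wpStop P)))

/-- Clause subsumption `C₁ ≼ C₂`. -/
def ClauseSub (C₁ C₂ : Clause atom) : Prop :=
  C₁.head = C₂.head ∧ C₁.pos ⊆ C₂.pos ∧ C₁.neg ⊆ C₂.neg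

/-- `P'` subsumes `Q` model-consistently with respect to `I`: `P' ≼_I Q`. -/
def SubsumesMC (P' Q : Program atom) (I : Interp atom) : Prop :=
  (∀ C₁ ∈ P', ∃ C₂ ∈ Q, ClauseSub C₁ C₂ ∧
      (∀ a ∈ C₂.pos, a ∉ C₁.pos → Lit.pos a ∈ I) ∧
      (∀ b ∈ C₂.neg, b ∉ C₁.neg → Lit.neg b ∈ I)) ∧
  (∀ C₂ ∈ Q, BodyTrue I C₂ → Lit.pos C₂.head ∉ I → ∃ C₁ ∈ P', ClauseSub C₁ C₂)


theorem TplusIter_mono_succ (P : Program atom) (n : ℕ) :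
    TplusIter P n ⊆ TplusIter P (n + 1) := by
  induction n with
  | zero => exact Set.empty_subset _
  | succ k ih =>
    rintro A ⟨C, hC, hh, hn, hp⟩
    exact ⟨C, hC, hh, hn, fun a ha => ih (hp a ha)⟩

theorem TplusIter_mono (P : Program atom) : Monotone (TplusIter P) :=
  monotone_nat_of_le_succ (TplusIter_mono_succ P)

theorem TplusOmega_finset (P : Program atom) (s : Finset atom)
    (h : ∀ a ∈ s, a ∈ TplusOmega P) : ∃ n, ∀ a ∈ s, a ∈ TplusIter P n := by
  classical
  induction s using Finset.induction_on with
  | empty => exact ⟨0, by simp⟩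
  | insert b s _ ih =>
    obtain ⟨n, hn⟩ := ih (fun a ha => h a (Finset.mem_insert_of_mem ha))
    obtain ⟨m, hm⟩ := Set.mem_iUnion.1 (h b (Finset.mem_insert_self b s))
    refine ⟨max n m, fun a ha => ?_⟩
    rcases Finset.mem_insert.1 ha with rfl | ha
    · exact TplusIter_mono P (le_max_right n m) hm
    · exact TplusIter_mono P (le_max_left n m) (hn a ha)

theorem TplusOmega_model (P : Program atom) (hP : Definite P) : Model2 P (TplusOmega P) := by
  intro C hC hp _
  obtain ⟨n, hn⟩ := TplusOmega_finset P C.pos hp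
  exact Set.mem_iUnion.2 ⟨n + 1, C, hC, rfl, hP C hC, hn⟩

theorem TplusOmega_least (P : Program atom) (M : Set atom) (hM : Model2 P M) :
    TplusOmega P ⊆ M := by
  have key : ∀ n, TplusIter P n ⊆ M := by
    intro n
    induction n with
    | zero => exact Set.empty_subset _
    | succ k ih =>
      rintro A ⟨C, hC, rfl, hn, hp⟩
      exact hM C hC (fun a ha => ih (hp a ha)) (by simp [hn])
  exact Set.iUnion_subset key

theorem TplusOmega_levels (P : Program atom) : ∃ l : atom → Ordinal.{0},
    ∀ A ∈ TplusOmega P, ∃ C ∈ P, C.head = A ∧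
      ∀ a ∈ C.pos, a ∈ TplusOmega P ∧ l a < l A := by
  refine ⟨fun A => ((sInf {n | A ∈ TplusIter P n} : ℕ) : Ordinal.{0}), fun A hA => ?_⟩
  have hne : {n | A ∈ TplusIter P n}.Nonempty := Set.mem_iUnion.1 hA
  have hmem : A ∈ TplusIter P (sInf {n | A ∈ TplusIter P n}) := Nat.sInf_mem hne
  generalize hk : sInf {n | A ∈ TplusIter P n} = k at hmem
  cases k with
  | zero => exact absurd hmem (Set.notMem_empty A)
  | succ k =>
    obtain ⟨C, hC, hh, _, hp⟩ := hmem
    refine ⟨C, hC, hh, fun a ha => ⟨Set.mem_iUnion.2 ⟨k, hp a ha⟩, ?_⟩⟩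
    have h1 : sInf {n | a ∈ TplusIter P n} ≤ k := Nat.sInf_le (hp a ha)
    exact Nat.cast_lt.2 (by omega)

theorem supported_eq (P : Program atom) (hP : Definite P) (M : Set atom)
    (h : Model2 P M ∧ ∃ l : atom → Ordinal.{0},
      ∀ A ∈ M, ∃ C ∈ P, C.head = A ∧ ∀ a ∈ C.pos, a ∈ M ∧ l a < l A) :
    M = TplusOmega P := by
  obtain ⟨hM, l, hl⟩ := h
  refine Set.Subset.antisymm ?_ (TplusOmega_least P M hM)
  intro A
  induction A using (InvImage.wf l Ordinal.lt_wf).induction with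
  | _ A ih =>
    intro hA
    obtain ⟨C, hC, rfl, hp⟩ := hl A hA
    exact TplusOmega_model P hP C hC (fun a ha => ih a (hp a ha).2 (hp a ha).1)
      (by simp [hP C hC])

/-- for a definite program there is a unique two-valued model supported
by a total level mapping, and it is the least two-valued model `T_P⁺↑ω`. -/
theorem definite_least_model_char {atom : Type} [Countable atom]
    (P : Program atom) (hP : Definite P) :
    (∃! M : Set atom, Model2 P M ∧ ∃ l : atom → Ordinal.{0},
        ∀ A ∈ M, ∃ C ∈ P, C.head = A ∧ ∀ a ∈ C.pos, a ∈ M ∧ l a < l A) ∧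
    ∀ M : Set atom,
      (Model2 P M ∧ ∃ l : atom → Ordinal.{0},
        ∀ A ∈ M, ∃ C ∈ P, C.head = A ∧ ∀ a ∈ C.pos, a ∈ M ∧ l a < l A) →
      M = TplusOmega P := by
  exact ⟨⟨TplusOmega P, ⟨TplusOmega_model P hP, TplusOmega_levels P⟩,
    fun M h => supported_eq P hP M h⟩, fun M h => supported_eq P hP M h⟩

end LP
end

section
/- Let P be a propositional normal logic program with Fitting model M (the least fixed point of Φ_P). Then M is a model of P, P satisfies (F) with respect to M and some M-partial level mapping, and for every model I of P and every I-partial level mapping l such that P satisfies (F) with respect to I and l, one has I ⊆ M. That is, M is the greatest model among all models I for which there exists an I-partial level mapping l for P such that P satisfies (F) with respect to I and l. -/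
namespace LP

variable {atom : Type}

theorem BodyTrue.mono' {I J : Interp atom} (h : I ⊆ J) {C : Clause atom}
    (hC : BodyTrue I C) : BodyTrue J C :=
  ⟨fun a ha => h (hC.1 a ha), fun b hb => h (hC.2 b hb)⟩

theorem BodyFalse.mono' {I J : Interp atom} (h : I ⊆ J) {C : Clause atom}
    (hC : BodyFalse I C) : BodyFalse J C := by
  rcases hC with ⟨a, ha, h1⟩ | ⟨a, ha, h1⟩
  · exact Or.inl ⟨a, ha, h h1⟩
  · exact Or.inr ⟨a, ha, h h1⟩

theorem pos_mem_Phi {P : Program atom} {I : Interp atom} {A : atom} :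
    Lit.pos A ∈ Phi P I ↔ ∃ C ∈ P, C.head = A ∧ BodyTrue I C := by
  simp [Phi, posLits, negLits, TP]

theorem neg_mem_Phi {P : Program atom} {I : Interp atom} {A : atom} :
    Lit.neg A ∈ Phi P I ↔ ∀ C ∈ P, C.head = A → BodyFalse I C := by
  simp [Phi, posLits, negLits, FP]

theorem Phi_mono {P : Program atom} {I J : Interp atom} (h : I ⊆ J) : Phi P I ⊆ Phi P J := by
  rintro (A | A) hA
  · obtain ⟨C, hC, hh, hb⟩ := pos_mem_Phi.1 hA
    exact pos_mem_Phi.2 ⟨C, hC, hh, hb.mono' h⟩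
  · exact neg_mem_Phi.2 fun C hC hh => (neg_mem_Phi.1 hA C hC hh).mono' h

theorem Phi_fit (P : Program atom) : Phi P (FittingModel P) ⊆ FittingModel P := by
  intro L hL J hJ
  exact hJ (Phi_mono (Set.sInter_subset_of_mem hJ) hL)

theorem fit_Phi (P : Program atom) : FittingModel P ⊆ Phi P (FittingModel P) :=
  Set.sInter_subset_of_mem (Phi_mono (Phi_fit P))

/-- Stages of the Fitting operator. -/
noncomputable def stage (P : Program atom) : Ordinal.{0} → Interp atom :=
  Ordinal.lt_wf.fix (C := fun _ => Interp atom)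
    (fun α ih => ⋃ β : Ordinal.{0}, ⋃ h : β < α, Phi P (ih β h))

theorem mem_stage {P : Program atom} {α : Ordinal.{0}} {L : Lit atom} :
    L ∈ stage P α ↔ ∃ β, β < α ∧ L ∈ Phi P (stage P β) := by
  unfold stage
  rw [WellFounded.fix_eq]
  simp

theorem stage_mono {P : Program atom} {α β : Ordinal.{0}} (h : α ≤ β) :
    stage P α ⊆ stage P β := by
  intro L hL
  obtain ⟨γ, hγ, h1⟩ := mem_stage.1 hL
  exact mem_stage.2 ⟨γ, hγ.trans_le h, h1⟩

theorem stage_fit (P : Program atom) (α : Ordinal.{0}) : stage P α ⊆ FittingModel P := by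
  induction α using Ordinal.induction with
  | h α ih =>
    intro L hL
    obtain ⟨γ, hγ, h1⟩ := mem_stage.1 hL
    exact Phi_fit P (Phi_mono (ih γ hγ) h1)

theorem stage_consistent (P : Program atom) (α : Ordinal.{0}) : Consistent (stage P α) := by
  induction α using Ordinal.induction with
  | h α ih =>
    rintro A ⟨h1, h2⟩
    obtain ⟨β, hβ, h1⟩ := mem_stage.1 h1
    obtain ⟨γ, hγ, h2⟩ := mem_stage.1 h2
    have h1 := Phi_mono (stage_mono (le_max_left β γ)) h1
    have h2 := Phi_mono (stage_mono (le_max_right β γ)) h2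
    have hc := ih _ (max_lt hβ hγ)
    obtain ⟨C, hC, hh, hb⟩ := pos_mem_Phi.1 h1
    rcases neg_mem_Phi.1 h2 C hC hh with ⟨a, ha, h⟩ | ⟨a, ha, h⟩
    · exact hc a ⟨hb.1 a ha, h⟩
    · exact hc a ⟨h, hb.2 a ha⟩

theorem exists_stage (P : Program atom) : ∃ γ, FittingModel P ⊆ stage P γ := by
  classical
  let r : Lit atom → Ordinal.{0} := fun L => sInf {α | L ∈ stage P α}
  have key : ∀ L α, L ∈ stage P α → L ∈ stage P (⨆ L, r L) := by
    intro L α h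
    have h1 : L ∈ stage P (r L) := csInf_mem (s := {α | L ∈ stage P α}) ⟨α, h⟩
    exact stage_mono (Ordinal.le_iSup r L) h1
  refine ⟨⨆ L, r L, Set.sInter_subset_of_mem ?_⟩
  intro L hL
  exact key L (Order.succ (⨆ L, r L)) (mem_stage.2 ⟨_, Order.lt_succ _, hL⟩)

theorem fit_condF (P : Program atom) :
    ∃ l : atom → Ordinal.{0}, CondF P (FittingModel P) l := by
  obtain ⟨γ, hγ⟩ := exists_stage P
  let S : atom → Set Ordinal.{0} := fun A => {α | Defined (Phi P (stage P α)) A}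
  refine ⟨fun A => sInf (S A), fun A hA => ?_⟩
  have hlt : ∀ a α, Defined (stage P α) a → sInf (S a) < α := by
    rintro a α (h | h)
    · obtain ⟨β, hβ, h1⟩ := mem_stage.1 h
      exact (csInf_le' (s := S a) (Or.inl h1)).trans_lt hβ
    · obtain ⟨β, hβ, h1⟩ := mem_stage.1 h
      exact (csInf_le' (s := S a) (Or.inr h1)).trans_lt hβ
  have hne : (S A).Nonempty :=
    ⟨γ, hA.imp (fun h => Phi_mono hγ (fit_Phi P h)) (fun h => Phi_mono hγ (fit_Phi P h))⟩
  have hm : Defined (Phi P (stage P (sInf (S A)))) A := csInf_mem hne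
  have hs := stage_fit P (sInf (S A))
  rcases hm with h | h
  · left
    refine ⟨Phi_fit P (Phi_mono hs h), ?_⟩
    obtain ⟨C, hC, hh, hb⟩ := pos_mem_Phi.1 h
    exact ⟨C, hC, hh, fun a ha => ⟨hs (hb.1 a ha), hlt _ _ (Or.inl (hb.1 a ha))⟩,
      fun a ha => ⟨hs (hb.2 a ha), hlt _ _ (Or.inr (hb.2 a ha))⟩⟩
  · right
    refine ⟨Phi_fit P (Phi_mono hs h), fun C hC hh => ?_⟩
    rcases neg_mem_Phi.1 h C hC hh with ⟨a, ha, h⟩ | ⟨a, ha, h⟩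
    · exact Or.inl ⟨a, ha, hs h, hlt _ _ (Or.inr h)⟩
    · exact Or.inr ⟨a, ha, hs h, hlt _ _ (Or.inl h)⟩

theorem condF_le (P : Program atom) (I : Interp atom) (l : atom → Ordinal.{0})
    (hI : Consistent I) (hF : CondF P I l) : I ⊆ FittingModel P := by
  have key : ∀ α A, l A = α → (Lit.pos A ∈ I → Lit.pos A ∈ FittingModel P) ∧
      (Lit.neg A ∈ I → Lit.neg A ∈ FittingModel P) := by
    intro α
    induction α using Ordinal.induction with
    | h α ih =>
      rintro A rfl
      constructor
      · intro hA
        rcases hF A (Or.inl hA) with ⟨-, C, hC, hh, h1, h2⟩ | ⟨h, -⟩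
        · exact Phi_fit P (pos_mem_Phi.2 ⟨C, hC, hh,
            fun a ha => (ih _ (h1 a ha).2 a rfl).1 (h1 a ha).1,
            fun a ha => (ih _ (h2 a ha).2 a rfl).2 (h2 a ha).1⟩)
        · exact (hI A ⟨hA, h⟩).elim
      · intro hA
        rcases hF A (Or.inr hA) with ⟨h, -⟩ | ⟨-, h⟩
        · exact (hI A ⟨h, hA⟩).elim
        · refine Phi_fit P (neg_mem_Phi.2 fun C hC hh => ?_)
          rcases h C hC hh with ⟨a, ha, h1, h2⟩ | ⟨a, ha, h1, h2⟩
          · exact Or.inl ⟨a, ha, (ih _ h2 a rfl).2 h1⟩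
          · exact Or.inr ⟨a, ha, (ih _ h2 a rfl).1 h1⟩
  rintro (A | A) hA
  · exact (key _ A rfl).1 hA
  · exact (key _ A rfl).2 hA

/-- the Fitting model is the greatest model `I` admitting an
`I`-partial level mapping `l` such that `P` satisfies (F) w.r.t. `I` and `l`. -/
theorem fitting_model_char {atom : Type} [Countable atom] (P : Program atom) :
    Model3 P (FittingModel P) ∧
    (∃ l : atom → Ordinal.{0}, CondF P (FittingModel P) l) ∧
    ∀ (I : Interp atom) (l : atom → Ordinal.{0}),
      Model3 P I → CondF P I l → I ⊆ FittingModel P := by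
  refine ⟨⟨?_, fun C hC => ⟨fun h => ?_, fun h hn => h ?_⟩⟩, fit_condF P,
    fun I l hI hF => condF_le P I l hI.1 hF⟩
  · obtain ⟨γ, hγ⟩ := exists_stage P
    exact fun a ha => stage_consistent P γ a ⟨hγ ha.1, hγ ha.2⟩
  · exact Phi_fit P (pos_mem_Phi.2 ⟨C, hC, rfl, h⟩)
  · exact neg_mem_Phi.1 (fit_Phi P hn) C hC rfl

end LP
end

section
/- Let P be a propositional normal logic program, let M_P be its Fitting model, and define the M_P-partial level mapping l_P by l_P(A) = the least ordinal α such that A is not undefined in Φ_P↑(α+1). Then P satisfies (F) with respect to M_P and l_P. -/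
namespace LP

variable {atom : Type}

theorem iterOrd_zero' {L : Type*} (F : Set L → Set L) : iterOrd F 0 = ∅ := by
  unfold iterOrd
  exact Ordinal.limitRecOn_zero _ _ _

theorem iterOrd_succ' {L : Type*} (F : Set L → Set L) (α : Ordinal.{0}) :
    iterOrd F (α + 1) = F (iterOrd F α) := by
  unfold iterOrd
  exact Ordinal.limitRecOn_add_one _ _ _ _

theorem iterOrd_limit' {L : Type*} (F : Set L → Set L) (o : Ordinal.{0})
    (ho : Order.IsSuccLimit o) : iterOrd F o = ⋃ β, ⋃ _ : β < o, iterOrd F β := by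
  unfold iterOrd
  exact Ordinal.limitRecOn_limit _ _ _ _ ho

theorem mem_iterOrd_exists {L : Type*} (F : Set L → Set L) (x : L) (β : Ordinal.{0}) :
    x ∈ iterOrd F β → ∃ δ < β, x ∈ iterOrd F (δ + 1) := by
  induction β using Ordinal.limitRecOn with
  | zero => intro h; rw [iterOrd_zero'] at h; exact h.elim
  | add_one o ih => intro h; exact ⟨o, Order.lt_add_one_iff.2 le_rfl, h⟩
  | limit o ho ih =>
    intro h
    rw [iterOrd_limit' F o ho] at h
    simp only [Set.mem_iUnion] at h
    obtain ⟨b, hb, hx⟩ := h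
    obtain ⟨δ, hδ, hx'⟩ := ih b hb hx
    exact ⟨δ, hδ.trans hb, hx'⟩

theorem iterOrd_mono' {L : Type*} (F : Set L → Set L) (hF : Monotone F) (γ : Ordinal.{0}) :
    ∀ β ≤ γ, iterOrd F β ⊆ iterOrd F γ := by
  induction γ using Ordinal.limitRecOn with
  | zero =>
    intro β hβ
    rw [show β = 0 from le_antisymm hβ zero_le]
  | add_one o ih =>
    intro β hβ
    rcases hβ.eq_or_lt with rfl | hlt
    · exact subset_rfl
    · refine (ih β (Order.lt_add_one_iff.1 hlt)).trans ?_
      intro x hx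
      obtain ⟨δ, hδ, hx'⟩ := mem_iterOrd_exists F x o hx
      rw [iterOrd_succ'] at hx' ⊢
      exact hF (ih δ hδ.le) hx'
  | limit o ho ih =>
    intro β hβ
    rcases hβ.eq_or_lt with rfl | hlt
    · exact subset_rfl
    · rw [iterOrd_limit' F o ho]
      exact Set.subset_iUnion₂_of_subset β hlt subset_rfl

theorem iterOrd_sub_lfp {L : Type*} (F : Set L → Set L) (hF : Monotone F) (γ : Ordinal.{0}) :
    iterOrd F γ ⊆ lfpSet F := by
  induction γ using Ordinal.limitRecOn with
  | zero => rw [iterOrd_zero']; exact Set.empty_subset _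
  | add_one o ih =>
    rw [iterOrd_succ']
    refine Set.subset_sInter fun I hI => ?_
    exact (hF (ih.trans (Set.sInter_subset_of_mem hI))).trans hI
  | limit o ho ih =>
    rw [iterOrd_limit' F o ho]
    exact Set.iUnion₂_subset ih

theorem lfp_sub_iterOrd {L : Type} (F : Set L → Set L) (hF : Monotone F) :
    ∃ γ : Ordinal.{0}, lfpSet F ⊆ iterOrd F γ := by
  classical
  let f : L → Ordinal.{0} := fun x => sInf {α | x ∈ iterOrd F α}
  obtain ⟨γ, hγ⟩ := (Ordinal.bddAbove_of_small (s := Set.range f))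
  refine ⟨γ, Set.sInter_subset_of_mem ?_⟩
  intro x hx
  rw [← iterOrd_succ' F γ] at hx
  have h1 : x ∈ iterOrd F (f x) := csInf_mem (s := {α | x ∈ iterOrd F α}) ⟨_, hx⟩
  exact iterOrd_mono' F hF γ _ (hγ ⟨x, rfl⟩) h1

theorem Phi_mono' {atom : Type} (P : Program atom) : Monotone (Phi P) := by
  intro I J hIJ
  refine Set.union_subset_union (Set.image_mono ?_) (Set.image_mono ?_)
  · rintro A ⟨C, hC, hA, h1, h2⟩
    exact ⟨C, hC, hA, fun a ha => hIJ (h1 a ha), fun b hb => hIJ (h2 b hb)⟩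
  · intro A h C hC hA
    rcases h C hC hA with ⟨a, ha, h⟩ | ⟨a, ha, h⟩
    · exact Or.inl ⟨a, ha, hIJ h⟩
    · exact Or.inr ⟨a, ha, hIJ h⟩

/-- `P` satisfies (F) w.r.t. its Fitting model and the level mapping
`l_P(A) = least α such that A is not undefined in Φ_P↑(α+1)`. -/
theorem fitting_levels_satisfy_F {atom : Type} [Countable atom] (P : Program atom) :
    CondF P (FittingModel P)
      (fun A => sInf {α : Ordinal.{0} | Defined (iterOrd (Phi P) (α + 1)) A}) := by
  intro A hA
  have hmono := Phi_mono' P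
  obtain ⟨γ, hγ⟩ := lfp_sub_iterOrd (Phi P) hmono
  have hsub : ∀ α, iterOrd (Phi P) α ⊆ FittingModel P := iterOrd_sub_lfp (Phi P) hmono
  have key : ∀ (β : Ordinal.{0}) (a : atom), Defined (iterOrd (Phi P) β) a →
      ∃ δ < β, Defined (iterOrd (Phi P) (δ + 1)) a := by
    rintro β a (h | h)
    · obtain ⟨δ, hδ, h'⟩ := mem_iterOrd_exists _ _ _ h
      exact ⟨δ, hδ, Or.inl h'⟩
    · obtain ⟨δ, hδ, h'⟩ := mem_iterOrd_exists _ _ _ h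
      exact ⟨δ, hδ, Or.inr h'⟩
  have lev : ∀ (β : Ordinal.{0}) (a : atom), Defined (iterOrd (Phi P) β) a →
      sInf {α : Ordinal.{0} | Defined (iterOrd (Phi P) (α + 1)) a} < β := by
    intro β a h
    obtain ⟨δ, hδ, h'⟩ := key β a h
    have h2 : δ ∈ {α : Ordinal.{0} | Defined (iterOrd (Phi P) (α + 1)) a} := h'
    exact (csInf_le' h2).trans_lt hδ
  have hne : {α : Ordinal.{0} | Defined (iterOrd (Phi P) (α + 1)) A}.Nonempty := by
    obtain ⟨δ, _, h⟩ := key γ A (hA.imp (fun h => hγ h) (fun h => hγ h))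
    exact ⟨δ, h⟩
  have hmem := csInf_mem hne
  beta_reduce
  generalize sInf {α : Ordinal.{0} | Defined (iterOrd (Phi P) (α + 1)) A} = β at hmem ⊢
  rcases hmem with h | h
  · refine Or.inl ⟨hsub _ h, ?_⟩
    rw [iterOrd_succ'] at h
    rcases h with ⟨B, hB, hBA⟩ | ⟨B, hB, hBA⟩
    · cases hBA
      obtain ⟨C, hC, hh, h1, h2⟩ := hB
      exact ⟨C, hC, hh, fun a ha => ⟨hsub _ (h1 a ha), lev _ _ (Or.inl (h1 a ha))⟩,
        fun a ha => ⟨hsub _ (h2 a ha), lev _ _ (Or.inr (h2 a ha))⟩⟩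
    · cases hBA
  · refine Or.inr ⟨hsub _ h, ?_⟩
    rw [iterOrd_succ'] at h
    rcases h with ⟨B, hB, hBA⟩ | ⟨B, hB, hBA⟩
    · cases hBA
    · cases hBA
      intro C hC hh
      rcases hB C hC hh with ⟨a, ha, h⟩ | ⟨a, ha, h⟩
      · exact Or.inl ⟨a, ha, hsub _ h, lev _ _ (Or.inr h)⟩
      · exact Or.inr ⟨a, ha, hsub _ h, lev _ _ (Or.inl h)⟩

end LP
end
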